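/- arXiv:1811.05731 — 2 statements merged into one kernel-verified Lean document; each statement's English description precedes it below -/
import Mathlib

section
/- Let f : ℝ³ → ℝ be smooth with compact support, and define the Newtonian potential u(x) = (1/(4π)) ∫_{ℝ³} f(y)/‖x − y‖ dy. Then u is twice continuously differentiable on ℝ³ and satisfies the Poisson equation −Δu(x) = f(x) for every x ∈ ℝ³. -/
open MeasureTheory Real

noncomputable def div3 (F : EuclideanSpace ℝ (Fin 3) → EuclideanSpace ℝ (Fin 3))
    (x : EuclideanSpace ℝ (Fin 3)) : ℝ :=
  ∑ i, fderiv ℝ F x (EuclideanSpace.single i 1) i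

noncomputable def lap (u : EuclideanSpace ℝ (Fin 3) → ℝ) (x : EuclideanSpace ℝ (Fin 3)) : ℝ :=
  div3 (gradient u) x

/-- The Newtonian potential of a density `f`. -/
noncomputable def newtonPot (f : EuclideanSpace ℝ (Fin 3) → ℝ)
    (x : EuclideanSpace ℝ (Fin 3)) : ℝ :=
  (1 / (4 * π)) * ∫ y, f y / ‖x - y‖

/-!
Write `d > 2` for the dimension and `ω` for the volume of the unit ball. The kernel `‖y‖ ^ (2 - d)`
is the limit of the smooth functions `(‖y‖ ^ 2 + ε ^ 2) ^ ((2 - d) / 2)`, whose Laplacian is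
`-d (d - 2)` times `ε ^ 2 (‖y‖ ^ 2 + ε ^ 2) ^ (-(d + 2) / 2)`. The latter functions are rescalings
of a single bump of total mass `ω`, because `d r ^ (d - 1) (1 + r ^ 2) ^ (-(d + 2) / 2)` is the
derivative of `(r / √(1 + r ^ 2)) ^ d`. Green's identity and `ε → 0` therefore give
`∫ ‖y‖ ^ (2 - d) Δg(y) dy = -d (d - 2) ω g(0)` for compactly supported `g`. Applied to the
translates of `f`, this is the Poisson equation, since convolving with the locally integrable kernel
commutes with `Δ`.
-/

open Bornology Filter InnerProductSpace Laplacian Metric Module Set Topology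
open scoped Convolution
open ContinuousLinearMap (lsmul)

section DirectionalDerivative

variable {E F : Type*} [NormedAddCommGroup E] [NormedSpace ℝ E]
  [NormedAddCommGroup F] [NormedSpace ℝ F]

theorem contDiff_one_fderiv_apply {f : E → F} (hf : ContDiff ℝ 2 f) (v : E) :
    ContDiff ℝ 1 fun x ↦ fderiv ℝ f x v :=
  (hf.fderiv_right (by norm_num)).clm_apply contDiff_const

theorem continuous_fderiv_fderiv_apply {f : E → F} (hf : ContDiff ℝ 2 f) (v : E) :
    Continuous fun x ↦ fderiv ℝ (fun z ↦ fderiv ℝ f z v) x v :=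
  ((contDiff_one_fderiv_apply hf v).continuous_fderiv one_ne_zero).clm_apply continuous_const

variable [FiniteDimensional ℝ E] [MeasurableSpace E] [BorelSpace E]
  {μ : Measure E} [μ.IsAddHaarMeasure] {a : E → ℝ} {g : E → F}

theorem integral_smul_fderiv_apply_eq_neg (ha : ContDiff ℝ 1 a) (hg : ContDiff ℝ 1 g)
    (hgs : HasCompactSupport g) (v : E) :
    ∫ y, a y • fderiv ℝ g y v ∂μ = -∫ y, fderiv ℝ a y v • g y ∂μ := by
  have hda : Continuous fun y ↦ fderiv ℝ a y v :=
    (ha.continuous_fderiv one_ne_zero).clm_apply continuous_const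
  have hdg : Continuous fun y ↦ fderiv ℝ g y v :=
    (hg.continuous_fderiv one_ne_zero).clm_apply continuous_const
  apply integral_smul_fderiv_eq_neg_fderiv_smul_of_integrable
  · exact (hda.smul hg.continuous).integrable_of_hasCompactSupport hgs.smul_left
  · exact (ha.continuous.smul hdg).integrable_of_hasCompactSupport (hgs.fderiv_apply ℝ v).smul_left
  · exact (ha.continuous.smul hg.continuous).integrable_of_hasCompactSupport hgs.smul_left
  · exact fun y _ ↦ ha.differentiable one_ne_zero y
  · exact fun y _ ↦ hg.differentiable one_ne_zero y

theorem integral_smul_fderiv_fderiv_apply (ha : ContDiff ℝ 2 a) (hg : ContDiff ℝ 2 g)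
    (hgs : HasCompactSupport g) (v : E) :
    ∫ y, a y • fderiv ℝ (fun z ↦ fderiv ℝ g z v) y v ∂μ =
      ∫ y, fderiv ℝ (fun z ↦ fderiv ℝ a z v) y v • g y ∂μ := by
  rw [integral_smul_fderiv_apply_eq_neg (ha.of_le one_le_two) (contDiff_one_fderiv_apply hg v)
      (hgs.fderiv_apply ℝ v),
    integral_smul_fderiv_apply_eq_neg (contDiff_one_fderiv_apply ha v) (hg.of_le one_le_two) hgs,
    neg_neg]

end DirectionalDerivative

section Laplacian

variable {E F : Type*} [NormedAddCommGroup E] [InnerProductSpace ℝ E] [FiniteDimensional ℝ E]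
  [NormedAddCommGroup F] [NormedSpace ℝ F] {f : E → F}

theorem laplacian_eq_sum_fderiv_fderiv_apply {ι : Type*} [Fintype ι] (b : OrthonormalBasis ι ℝ E)
    (hf : ContDiff ℝ 2 f) (x : E) :
    (Δ f) x = ∑ i, fderiv ℝ (fun z ↦ fderiv ℝ f z (b i)) x (b i) := by
  have hf' : DifferentiableAt ℝ (fderiv ℝ f) x :=
    (hf.fderiv_right (m := 1) (by norm_num)).differentiable one_ne_zero x
  simp [laplacian_eq_iteratedFDeriv_orthonormalBasis f b, iteratedFDeriv_two_apply,
    fderiv_clm_apply hf' (differentiableAt_const _)]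

theorem continuous_laplacian (hf : ContDiff ℝ 2 f) : Continuous (Δ f) := by
  rw [laplacian_eq_iteratedFDeriv_stdOrthonormalBasis]
  have := hf.continuous_iteratedFDeriv le_rfl
  fun_prop

theorem hasCompactSupport_laplacian (hf : HasCompactSupport f) : HasCompactSupport (Δ f) := by
  rw [laplacian_eq_iteratedFDeriv_stdOrthonormalBasis]
  refine (hf.iteratedFDeriv (𝕜 := ℝ) 2).mono' fun x hx ↦ subset_tsupport _ fun h ↦ hx ?_
  simp [h]

theorem laplacian_comp_add_left (f : E → F) (a x : E) :
    (Δ fun y ↦ f (a + y)) x = (Δ f) (a + x) := by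
  simp only [laplacian_eq_iteratedFDeriv_stdOrthonormalBasis, iteratedFDeriv_comp_add_left]

end Laplacian

section Green

variable {E F : Type*} [NormedAddCommGroup E] [InnerProductSpace ℝ E] [FiniteDimensional ℝ E]
  [MeasurableSpace E] [BorelSpace E] [NormedAddCommGroup F] [NormedSpace ℝ F]
  {μ : Measure E} [μ.IsAddHaarMeasure] {a : E → ℝ} {g : E → F}

theorem integral_smul_laplacian_eq_integral_laplacian_smul (ha : ContDiff ℝ 2 a)
    (hg : ContDiff ℝ 2 g) (hgs : HasCompactSupport g) :
    ∫ y, a y • (Δ g) y ∂μ = ∫ y, (Δ a) y • g y ∂μ := by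
  let b := stdOrthonormalBasis ℝ E
  simp_rw [laplacian_eq_sum_fderiv_fderiv_apply b ha, laplacian_eq_sum_fderiv_fderiv_apply b hg,
    Finset.smul_sum, Finset.sum_smul]
  rw [integral_finsetSum, integral_finsetSum]
  · exact Finset.sum_congr rfl fun i _ ↦ integral_smul_fderiv_fderiv_apply ha hg hgs (b i)
  · exact fun i _ ↦ ((continuous_fderiv_fderiv_apply ha _).smul
      hg.continuous).integrable_of_hasCompactSupport hgs.smul_left
  · exact fun i _ ↦ (ha.continuous.smul
      (continuous_fderiv_fderiv_apply hg _)).integrable_of_hasCompactSupport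
        ((hgs.fderiv_apply ℝ _).fderiv_apply ℝ _).smul_left

end Green

section Convolution

variable {E F : Type*} [NormedAddCommGroup E] [MeasurableSpace E] [BorelSpace E]
  [NormedAddCommGroup F] [NormedSpace ℝ F] {μ : Measure E} {K : E → ℝ} {f : E → F}

theorem convolution_eq_integral_smul_comp_add [μ.IsNegInvariant] (hK : ∀ y, K (-y) = K y)
    (f : E → F) (x : E) : (K ⋆[lsmul ℝ ℝ, μ] f) x = ∫ y, K y • f (x + y) ∂μ := by
  rw [convolution_def, ← integral_neg_eq_self]
  simp [hK]

theorem fderiv_convolution_apply [NormedSpace ℝ E] [SFinite μ] [μ.IsAddLeftInvariant]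
    (hK : LocallyIntegrable K μ) (hf : ContDiff ℝ 1 f) (hfs : HasCompactSupport f) (x v : E) :
    fderiv ℝ (K ⋆[lsmul ℝ ℝ, μ] f) x v = (K ⋆[lsmul ℝ ℝ, μ] fun z ↦ fderiv ℝ f z v) x := by
  have hconv := hfs.hasFDerivAt_convolution_right (lsmul ℝ ℝ : ℝ →L[ℝ] F →L[ℝ] F) hK hf x
  rw [hconv.fderiv,
    convolution_precompR_apply (lsmul ℝ ℝ) hK (hfs.fderiv ℝ) (hf.continuous_fderiv one_ne_zero)]

theorem laplacian_convolution [InnerProductSpace ℝ E] [FiniteDimensional ℝ E] [SFinite μ]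
    [μ.IsAddLeftInvariant] (hK : LocallyIntegrable K μ) (hf : ContDiff ℝ 2 f)
    (hfs : HasCompactSupport f) (x : E) :
    (Δ (K ⋆[lsmul ℝ ℝ, μ] f)) x = (K ⋆[lsmul ℝ ℝ, μ] Δ f) x := by
  let b := stdOrthonormalBasis ℝ E
  have hdf (i) : ContDiff ℝ 1 fun z ↦ fderiv ℝ f z (b i) := contDiff_one_fderiv_apply hf _
  have hdfs (i) : HasCompactSupport fun z ↦ fderiv ℝ f z (b i) := hfs.fderiv_apply ℝ _
  rw [laplacian_eq_sum_fderiv_fderiv_apply b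
    (hfs.contDiff_convolution_right (n := 2) (lsmul ℝ ℝ) hK hf)]
  simp_rw [fderiv_convolution_apply hK (hf.of_le one_le_two) hfs,
    fderiv_convolution_apply hK (hdf _) (hdfs _), convolution_def,
    laplacian_eq_sum_fderiv_fderiv_apply b hf, map_sum]
  exact (integral_finsetSum _ fun i _ ↦ ((hdfs i).fderiv_apply ℝ _).convolutionExists_right
    (lsmul ℝ ℝ) hK (continuous_fderiv_fderiv_apply hf _) x).symm

end Convolution

section RegularizedKernel

variable {E : Type*} [NormedAddCommGroup E] [InnerProductSpace ℝ E] {e : ℝ}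

theorem contDiff_norm_sq_add_rpow (he : 0 < e) (p : ℝ) {n : WithTop ℕ∞} :
    ContDiff ℝ n fun y : E ↦ (‖y‖ ^ 2 + e) ^ p :=
  ((contDiff_norm_sq ℝ).add contDiff_const).rpow_const_of_ne fun y ↦ by positivity

theorem hasFDerivAt_norm_sq_add_rpow (he : 0 < e) (p : ℝ) (y : E) :
    HasFDerivAt (fun z : E ↦ (‖z‖ ^ 2 + e) ^ p)
      ((2 * p * (‖y‖ ^ 2 + e) ^ (p - 1)) • innerSL ℝ y) y := by
  have hsq : HasFDerivAt (fun z : E ↦ ‖z‖ ^ 2 + e) (2 • innerSL ℝ y) y :=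
    (hasStrictFDerivAt_norm_sq y).hasFDerivAt.add_const e
  convert! hsq.rpow_const (p := p) (Or.inl (by positivity)) using 1
  module

theorem fderiv_fderiv_norm_sq_add_rpow_apply (he : 0 < e) (p : ℝ) (y v : E) :
    fderiv ℝ (fun z : E ↦ fderiv ℝ (fun w : E ↦ (‖w‖ ^ 2 + e) ^ p) z v) y v =
      2 * p * (‖y‖ ^ 2 + e) ^ (p - 1) * ‖v‖ ^ 2 +
        4 * p * (p - 1) * (‖y‖ ^ 2 + e) ^ (p - 2) * inner ℝ v y ^ 2 := by
  have hfst (z : E) : fderiv ℝ (fun w : E ↦ (‖w‖ ^ 2 + e) ^ p) z v =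
      2 * p * ((‖z‖ ^ 2 + e) ^ (p - 1) * inner ℝ v z) := by
    simp only [(hasFDerivAt_norm_sq_add_rpow he p z).fderiv, smul_apply,
      innerSL_apply_apply, smul_eq_mul, real_inner_comm, mul_assoc]
  have hsnd := (((hasFDerivAt_norm_sq_add_rpow he (p - 1) y).mul
    (innerSL ℝ v).hasFDerivAt).const_mul (2 * p)).fderiv
  simp only [hfst]
  refine (congrArg (· v) hsnd).trans ?_
  simp only [coe_innerSL_apply, real_inner_comm y v, smul_add, add_apply, smul_apply,
    real_inner_self_eq_norm_sq, smul_eq_mul]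
  ring_nf

theorem laplacian_norm_sq_add_rpow [FiniteDimensional ℝ E] (he : 0 < e) (p : ℝ) (y : E) :
    (Δ fun z : E ↦ (‖z‖ ^ 2 + e) ^ p) y =
      2 * p * finrank ℝ E * (‖y‖ ^ 2 + e) ^ (p - 1) +
        4 * p * (p - 1) * ‖y‖ ^ 2 * (‖y‖ ^ 2 + e) ^ (p - 2) := by
  let b := stdOrthonormalBasis ℝ E
  rw [laplacian_eq_sum_fderiv_fderiv_apply b (contDiff_norm_sq_add_rpow he p)]
  simp_rw [fderiv_fderiv_norm_sq_add_rpow_apply he, Finset.sum_add_distrib, b.norm_eq_one,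
    ← Finset.mul_sum, b.sum_sq_inner_right]
  simp only [one_pow, Finset.sum_const, Finset.card_univ, Fintype.card_fin, nsmul_eq_mul, mul_one]
  ring

theorem laplacian_norm_sq_add_rpow_two_sub_finrank [FiniteDimensional ℝ E] (he : 0 < e) (y : E) :
    (Δ fun z : E ↦ (‖z‖ ^ 2 + e) ^ ((2 - finrank ℝ E : ℝ) / 2)) y =
      -(finrank ℝ E * (finrank ℝ E - 2)) * (e * (‖y‖ ^ 2 + e) ^ (-(finrank ℝ E + 2 : ℝ) / 2)) := by
  have hpos : 0 < ‖y‖ ^ 2 + e := by positivity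
  have hexp : (2 - finrank ℝ E : ℝ) / 2 - 1 = -(finrank ℝ E + 2 : ℝ) / 2 + 1 := by ring
  rw [laplacian_norm_sq_add_rpow he, hexp, rpow_add_one hpos.ne']
  ring_nf

end RegularizedKernel

section Limits

theorem tendsto_integral_norm_sq_add_sq_rpow_smul {E F : Type*} [NormedAddCommGroup E]
    [MeasurableSpace E] [BorelSpace E] [NormedAddCommGroup F] [NormedSpace ℝ F] {μ : Measure E}
    [NullSingletonClass μ] {g : E → F} {p : ℝ} (hp : p ≤ 0) (hg : AEStronglyMeasurable g μ)
    (hint : Integrable (fun y ↦ ‖y‖ ^ p • g y) μ) :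
    Tendsto (fun ε : ℝ ↦ ∫ y, (‖y‖ ^ 2 + ε ^ 2) ^ (p / 2) • g y ∂μ) (𝓝 0)
      (𝓝 (∫ y, ‖y‖ ^ p • g y ∂μ)) := by
  have norm_rpow (y : E) : ‖y‖ ^ p = (‖y‖ ^ 2) ^ (p / 2) := by
    rw [← rpow_natCast_mul (norm_nonneg y)]
    congr 1
    push_cast
    ring
  have hne : ∀ᵐ y ∂μ, y ≠ 0 := by simp [ae_iff, measure_singleton]
  refine tendsto_integral_filter_of_dominated_convergence (fun y ↦ ‖‖y‖ ^ p • g y‖)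
    (.of_forall fun ε ↦ ?_) (.of_forall fun ε ↦ ?_) hint.norm ?_
  · exact (Measurable.aestronglyMeasurable (by fun_prop)).smul hg
  · filter_upwards [hne] with y hy
    have : 0 < ‖y‖ := norm_pos_iff.mpr hy
    rw [norm_smul, norm_smul, norm_of_nonneg (by positivity), norm_of_nonneg (by positivity),
      norm_rpow]
    gcongr ?_ * _
    exact rpow_le_rpow_of_nonpos (by positivity) (le_add_of_nonneg_right (sq_nonneg ε))
      (by linarith)
  · filter_upwards [hne] with y hy
    have hlim : Tendsto (fun ε : ℝ ↦ ‖y‖ ^ 2 + ε ^ 2) (𝓝 0) (𝓝 (‖y‖ ^ 2)) := by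
      simpa using (by fun_prop : Continuous fun ε : ℝ ↦ ‖y‖ ^ 2 + ε ^ 2).tendsto 0
    rw [norm_rpow]
    exact (hlim.rpow_const (Or.inl (by simpa using hy))).smul_const (g y)

theorem hasDerivAt_pow_mul_one_add_sq_rpow (n : ℕ) (r : ℝ) :
    HasDerivAt (fun r : ℝ ↦ r ^ n * (1 + r ^ 2) ^ (-n / 2 : ℝ))
      (n * (r ^ (n - 1) * (1 + r ^ 2) ^ (-(n + 2) / 2 : ℝ))) r := by
  obtain _ | m := n
  · simpa using hasDerivAt_const r (1 : ℝ)
  have hpos : 0 < 1 + r ^ 2 := by positivity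
  have hexp : (-(m + 1 : ℕ) / 2 : ℝ) = -((m + 1 : ℕ) + 2) / 2 + 1 := by ring
  convert! (hasDerivAt_pow (m + 1) r).mul
    (((hasDerivAt_pow 2 r).const_add 1).rpow_const (p := (-(m + 1 : ℕ) / 2 : ℝ)) (Or.inl hpos.ne'))
    using 1
  rw [hexp, add_sub_cancel_right, rpow_add_one hpos.ne']
  push_cast
  simp only [neg_add_rev, pow_one]
  ring

theorem tendsto_pow_mul_one_add_sq_rpow (n : ℕ) :
    Tendsto (fun r : ℝ ↦ r ^ n * (1 + r ^ 2) ^ (-n / 2 : ℝ)) atTop (𝓝 1) := by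
  have hinv : Tendsto (fun r : ℝ ↦ (r ^ 2)⁻¹ + 1) atTop (𝓝 1) := by
    simpa using (tendsto_pow_atTop two_ne_zero).inv_tendsto_atTop.add_const (1 : ℝ)
  have hlim := hinv.rpow_const (p := (-n / 2 : ℝ)) (Or.inl one_ne_zero)
  rw [one_rpow] at hlim
  refine hlim.congr' ?_
  filter_upwards [eventually_gt_atTop 0] with r hr
  have hfactor : 1 + r ^ 2 = r ^ 2 * ((r ^ 2)⁻¹ + 1) := by field_simp
  have hcancel : r ^ n * (r ^ 2) ^ (-n / 2 : ℝ) = 1 := by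
    rw [← rpow_natCast_mul hr.le, ← rpow_natCast r n, ← rpow_add hr]
    convert rpow_zero r
    push_cast
    ring
  rw [hfactor, mul_rpow (by positivity) (by positivity), ← mul_assoc, hcancel, one_mul]

theorem integral_Ioi_pow_mul_one_add_sq_rpow {n : ℕ} (hn : n ≠ 0) :
    (n : ℝ) * ∫ r in Ioi (0 : ℝ), r ^ (n - 1) * (1 + r ^ 2) ^ (-(n + 2) / 2 : ℝ) = 1 := by
  rw [← integral_const_mul, integral_Ioi_of_hasDerivAt_of_nonneg'
    (fun r _ ↦ hasDerivAt_pow_mul_one_add_sq_rpow n r)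
    (fun r (hr : 0 < r) ↦ by positivity) (tendsto_pow_mul_one_add_sq_rpow n)]
  simp [hn]

theorem tendsto_norm_pow_mul_one_add_norm_sq_rpow_cobounded (E : Type*)
    [NormedAddCommGroup E] (n : ℕ) :
    Tendsto (fun z : E ↦ ‖z‖ ^ n * (1 + ‖z‖ ^ 2) ^ (-(n + 2) / 2 : ℝ)) (cobounded E) (𝓝 0) := by
  have hinv : Tendsto (fun z : E ↦ (‖z‖ ^ 2)⁻¹) (cobounded E) (𝓝 0) :=
    ((tendsto_pow_atTop two_ne_zero).comp tendsto_norm_cobounded_atTop).inv_tendsto_atTop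
  rw [← one_mul (0 : ℝ)]
  refine ((tendsto_pow_mul_one_add_sq_rpow (n + 2)).comp
    tendsto_norm_cobounded_atTop).mul hinv |>.congr' ?_
  filter_upwards [eventually_ne_cobounded 0] with z hz
  have hz' : ‖z‖ ≠ 0 := norm_ne_zero_iff.mpr hz
  simp only [Nat.cast_add, Nat.cast_ofNat, neg_add_rev, Function.comp_apply]
  field_simp
  ring

theorem inv_pow_mul_one_add_norm_inv_smul_sq_rpow {E : Type*} [NormedAddCommGroup E]
    [NormedSpace ℝ E] {ε : ℝ} (hε : 0 < ε) (n : ℕ) (y : E) :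
    ε⁻¹ ^ n * (1 + ‖ε⁻¹ • y‖ ^ 2) ^ (-(n + 2) / 2 : ℝ) =
      ε ^ 2 * (‖y‖ ^ 2 + ε ^ 2) ^ (-(n + 2) / 2 : ℝ) := by
  have hscale : 1 + ‖ε⁻¹ • y‖ ^ 2 = (‖y‖ ^ 2 + ε ^ 2) / ε ^ 2 := by
    rw [norm_smul, norm_of_nonneg (inv_pos.mpr hε).le]
    field_simp
    ring
  have hpow : (ε ^ 2) ^ (-(n + 2) / 2 : ℝ) = (ε ^ (n + 2))⁻¹ := by
    rw [← rpow_natCast_mul hε.le, ← rpow_natCast ε (n + 2), ← rpow_neg hε.le]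
    congr 1
    push_cast
    ring
  rw [hscale, div_rpow (by positivity) (by positivity), hpow, inv_pow]
  field_simp
  ring

theorem measureReal_ball_pos {E : Type*} [PseudoMetricSpace E] [ProperSpace E]
    [MeasurableSpace E] (μ : Measure E) [μ.IsOpenPosMeasure] [IsFiniteMeasureOnCompacts μ]
    (x : E) {r : ℝ} (hr : 0 < r) : 0 < μ.real (ball x r) :=
  ENNReal.toReal_pos (measure_ball_pos μ x hr).ne' measure_ball_lt_top.ne

variable {E F : Type*} [NormedAddCommGroup E] [NormedSpace ℝ E] [FiniteDimensional ℝ E]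
  [MeasurableSpace E] [BorelSpace E] [NormedAddCommGroup F] [NormedSpace ℝ F]

theorem integral_one_add_norm_sq_rpow [Nontrivial E] (μ : Measure E) [μ.IsAddHaarMeasure] :
    ∫ z, (1 + ‖z‖ ^ 2) ^ (-(finrank ℝ E + 2) / 2 : ℝ) ∂μ = μ.real (ball 0 1) := by
  rw [integral_fun_norm_addHaar μ fun r ↦ (1 + r ^ 2) ^ (-(finrank ℝ E + 2) / 2 : ℝ)]
  simp only [smul_eq_mul, nsmul_eq_mul]
  rw [mul_left_comm, integral_Ioi_pow_mul_one_add_sq_rpow finrank_pos.ne', mul_one]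

theorem tendsto_integral_sq_mul_norm_sq_add_sq_rpow_smul {μ : Measure E} [μ.IsAddHaarMeasure]
    [Nontrivial E] [CompleteSpace F] {g : E → F} (hg : Integrable g μ) (hg0 : ContinuousAt g 0) :
    Tendsto (fun ε : ℝ ↦ ∫ y, (ε ^ 2 * (‖y‖ ^ 2 + ε ^ 2) ^ (-(finrank ℝ E + 2) / 2 : ℝ)) • g y ∂μ)
      (𝓝[>] 0) (𝓝 (μ.real (ball 0 1) • g 0)) := by
  set ω := μ.real (ball (0 : E) 1)
  have hω : 0 < ω := measureReal_ball_pos μ 0 one_pos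
  have hdecay :=
    (tendsto_norm_pow_mul_one_add_norm_sq_rpow_cobounded E (finrank ℝ E)).const_mul ω⁻¹
  have hpeak := tendsto_integral_comp_smul_smul_of_integrable (μ := μ)
    (φ := fun z ↦ ω⁻¹ * (1 + ‖z‖ ^ 2) ^ (-(finrank ℝ E + 2) / 2 : ℝ)) (fun z ↦ by positivity)
    (by rw [integral_const_mul, integral_one_add_norm_sq_rpow, inv_mul_cancel₀ hω.ne'])
    (by simpa only [mul_left_comm, mul_zero] using hdecay) hg hg0
  refine ((hpeak.comp tendsto_inv_nhdsGT_zero).const_smul ω).congr' ?_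
  filter_upwards [self_mem_nhdsWithin] with ε hε
  rw [Function.comp_apply, ← integral_smul]
  congr 1 with y
  rw [smul_smul, mul_left_comm (ε⁻¹ ^ _), mul_inv_cancel_left₀ hω.ne',
    inv_pow_mul_one_add_norm_inv_smul_sq_rpow hε]

end Limits

section Potential

variable {E F : Type*} [NormedAddCommGroup E] [InnerProductSpace ℝ E] [FiniteDimensional ℝ E]
  [MeasurableSpace E] [BorelSpace E] [NormedAddCommGroup F] [NormedSpace ℝ F]

/-- The Newtonian potential of a density `f` on a Euclidean space of dimension `d > 2`: the
convolution of `f` with the fundamental solution `‖y‖ ^ (2 - d) / (d (d - 2) ω)` of `-Δ`, where `ω`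
is the volume of the unit ball. Dividing by `ω` makes it independent of the choice of the Haar
measure `μ`. -/
noncomputable def newtonianPotential (μ : Measure E) (f : E → F) (x : E) : F :=
  (finrank ℝ E * (finrank ℝ E - 2) * μ.real (ball (0 : E) 1))⁻¹ •
    ∫ y, ‖x - y‖ ^ (2 - finrank ℝ E : ℝ) • f y ∂μ

variable {μ : Measure E} [μ.IsAddHaarMeasure] {f : E → F}

theorem locallyIntegrable_norm_rpow_two_sub_finrank [Nontrivial E] :
    LocallyIntegrable (fun y : E ↦ ‖y‖ ^ (2 - finrank ℝ E : ℝ)) μ :=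
  locallyIntegrable_of_norm_le_rpow (C := 1) (α := finrank ℝ E - 2) finrank_pos (by linarith)
    (.of_forall fun y ↦ by simp [abs_of_nonneg (rpow_nonneg (norm_nonneg y) _)])
    (Measurable.aestronglyMeasurable (by fun_prop))

theorem integral_norm_rpow_smul_laplacian [CompleteSpace F] (hd : 2 ≤ finrank ℝ E)
    (hf : ContDiff ℝ 2 f) (hfs : HasCompactSupport f) :
    ∫ y, ‖y‖ ^ (2 - finrank ℝ E : ℝ) • (Δ f) y ∂μ =
      -(finrank ℝ E * (finrank ℝ E - 2) * μ.real (ball (0 : E) 1)) • f 0 := by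
  have : Nontrivial E := nontrivial_of_finrank_pos (two_pos.trans_le hd)
  have hd' : (2 : ℝ) ≤ finrank ℝ E := mod_cast hd
  have hΔf := continuous_laplacian hf
  have hregular : Tendsto
      (fun ε : ℝ ↦ ∫ y, (‖y‖ ^ 2 + ε ^ 2) ^ ((2 - finrank ℝ E : ℝ) / 2) • (Δ f) y ∂μ) (𝓝[>] 0)
      (𝓝 (∫ y, ‖y‖ ^ (2 - finrank ℝ E : ℝ) • (Δ f) y ∂μ)) :=
    (tendsto_integral_norm_sq_add_sq_rpow_smul (by linarith) hΔf.aestronglyMeasurable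
      (locallyIntegrable_norm_rpow_two_sub_finrank.integrable_smul_right_of_hasCompactSupport
        hΔf (hasCompactSupport_laplacian hfs))).mono_left nhdsWithin_le_nhds
  have hpeak := (tendsto_integral_sq_mul_norm_sq_add_sq_rpow_smul (μ := μ)
    (hf.continuous.integrable_of_hasCompactSupport hfs) hf.continuous.continuousAt).const_smul
      (-(finrank ℝ E * (finrank ℝ E - 2) : ℝ))
  rw [smul_smul, neg_mul] at hpeak
  refine tendsto_nhds_unique hregular (hpeak.congr' ?_)
  filter_upwards [self_mem_nhdsWithin] with ε hε
  have hε2 : 0 < ε ^ 2 := pow_pos hε 2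
  rw [integral_smul_laplacian_eq_integral_laplacian_smul (contDiff_norm_sq_add_rpow hε2 _) hf hfs,
    ← integral_smul]
  simp_rw [laplacian_norm_sq_add_rpow_two_sub_finrank hε2, mul_smul]

theorem newtonianPotential_eq_smul_convolution (f : E → F) :
    newtonianPotential μ f = (finrank ℝ E * (finrank ℝ E - 2) * μ.real (ball (0 : E) 1))⁻¹ •
      ((fun y ↦ ‖y‖ ^ (2 - finrank ℝ E : ℝ)) ⋆[lsmul ℝ ℝ, μ] f) := by
  ext x
  simp [newtonianPotential, convolution_eq_swap]

theorem laplacian_convolution_norm_rpow [CompleteSpace F] (hd : 2 ≤ finrank ℝ E)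
    (hf : ContDiff ℝ 2 f) (hfs : HasCompactSupport f) (x : E) :
    (Δ ((fun y ↦ ‖y‖ ^ (2 - finrank ℝ E : ℝ)) ⋆[lsmul ℝ ℝ, μ] f)) x =
      -(finrank ℝ E * (finrank ℝ E - 2) * μ.real (ball (0 : E) 1)) • f x := by
  have : Nontrivial E := nontrivial_of_finrank_pos (two_pos.trans_le hd)
  have hf_shift : ContDiff ℝ 2 fun y ↦ f (x + y) := hf.comp (contDiff_const.add contDiff_id)
  have hfs_shift : HasCompactSupport fun y ↦ f (x + y) :=
    hfs.comp_homeomorph (Homeomorph.addLeft x)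
  rw [laplacian_convolution locallyIntegrable_norm_rpow_two_sub_finrank hf hfs,
    convolution_eq_integral_smul_comp_add (by simp)]
  simp_rw [← laplacian_comp_add_left f x]
  rw [integral_norm_rpow_smul_laplacian hd hf_shift hfs_shift, add_zero]

theorem newtonian_potential_solves_poisson_general [CompleteSpace F] (hd : 2 < finrank ℝ E)
    (hf : ContDiff ℝ 2 f) (hfs : HasCompactSupport f) :
    ContDiff ℝ 2 (newtonianPotential μ f) ∧ ∀ x, -(Δ (newtonianPotential μ f)) x = f x := by
  have : Nontrivial E := nontrivial_of_finrank_pos (pos_of_gt hd)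
  have hd' : (2 : ℝ) < finrank ℝ E := mod_cast hd
  have hconv : ContDiff ℝ 2 ((fun y ↦ ‖y‖ ^ (2 - finrank ℝ E : ℝ)) ⋆[lsmul ℝ ℝ, μ] f) :=
    hfs.contDiff_convolution_right (n := 2) _ locallyIntegrable_norm_rpow_two_sub_finrank hf
  rw [newtonianPotential_eq_smul_convolution]
  refine ⟨hconv.const_smul _, fun x ↦ ?_⟩
  have hconst : 0 < finrank ℝ E * (finrank ℝ E - 2) * μ.real (ball (0 : E) 1) :=
    mul_pos (mul_pos (by linarith) (by linarith)) (measureReal_ball_pos μ 0 one_pos)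
  rw [laplacian_smul _ hconv.contDiffAt, laplacian_convolution_norm_rpow hd.le hf hfs, neg_smul,
    smul_neg, neg_neg, inv_smul_smul₀ hconst.ne']

end Potential

section ThreeDimensional

theorem inner_fderiv_gradient {E : Type*} [NormedAddCommGroup E] [InnerProductSpace ℝ E]
    [CompleteSpace E] {u : E → ℝ} {x : E} (hu : DifferentiableAt ℝ (fderiv ℝ u) x) (v w : E) :
    inner ℝ w (fderiv ℝ (gradient u) x v) = fderiv ℝ (fun z ↦ fderiv ℝ u z w) x v := by
  have hgrad : DifferentiableAt ℝ (gradient u) x :=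
    (InnerProductSpace.toDual ℝ E).symm.toContinuousLinearEquiv.differentiableAt.comp x hu
  have hinner (z : E) : fderiv ℝ u z w = innerSL ℝ w (gradient u z) := by
    rw [innerSL_apply_apply, real_inner_comm, gradient, toDual_symm_apply]
  simp_rw [hinner]
  exact (DFunLike.congr_fun ((innerSL ℝ w).hasFDerivAt.comp x hgrad.hasFDerivAt).fderiv v).symm

theorem lap_eq_laplacian {u : EuclideanSpace ℝ (Fin 3) → ℝ} (hu : ContDiff ℝ 2 u)
    (x : EuclideanSpace ℝ (Fin 3)) : lap u x = (Δ u) x := by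
  have hu' : DifferentiableAt ℝ (fderiv ℝ u) x :=
    (hu.fderiv_right (m := 1) (by norm_num)).differentiable one_ne_zero x
  rw [laplacian_eq_sum_fderiv_fderiv_apply (EuclideanSpace.basisFun (Fin 3) ℝ) hu, lap, div3]
  simp_rw [← inner_fderiv_gradient hu', EuclideanSpace.basisFun_apply,
    EuclideanSpace.inner_single_left, map_one, one_mul]

theorem newtonPot_eq_newtonianPotential (f : EuclideanSpace ℝ (Fin 3) → ℝ) :
    newtonPot f = newtonianPotential volume f := by
  have hvol : volume.real (ball (0 : EuclideanSpace ℝ (Fin 3)) 1) = π * 4 / 3 := by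
    rw [measureReal_def, EuclideanSpace.volume_ball_fin_three, ENNReal.ofReal_one, one_pow, one_mul,
      ENNReal.toReal_ofReal (by positivity)]
  have hconst : ((3 : ℕ) * ((3 : ℕ) - 2) * (π * 4 / 3) : ℝ) = 4 * π := by
    push_cast
    ring
  have hexp : (2 - (3 : ℕ) : ℝ) = -1 := by norm_num
  ext x
  simp only [newtonPot, newtonianPotential, hvol, finrank_euclideanSpace_fin, hconst, hexp,
    rpow_neg_one, smul_eq_mul, one_div, div_eq_inv_mul (f _)]

end ThreeDimensional

/-- For smooth compactly supported `f`, the Newtonian potential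
`u(x) = (1/4π) ∫ f(y)/‖x-y‖ dy` is `C²` and satisfies `-Δu = f` everywhere. -/
theorem newtonian_potential_solves_poisson
    (f : EuclideanSpace ℝ (Fin 3) → ℝ)
    (hf : ContDiff ℝ (⊤ : ℕ∞) f) (hsupp : HasCompactSupport f) :
    ContDiff ℝ 2 (newtonPot f) ∧ ∀ x, -lap (newtonPot f) x = f x := by
  obtain ⟨hu, hΔ⟩ := newtonian_potential_solves_poisson_general (μ := volume) (by simp)
    (contDiff_infty.mp hf 2) hsupp
  rw [newtonPot_eq_newtonianPotential]
  exact ⟨hu, fun x ↦ by rw [lap_eq_laplacian hu, hΔ]⟩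
end

section
/- Let R > 0. For every x ∈ ℝ³ with ‖x‖ < R, one has (1/(4π)) ∫_{‖y‖ ≤ R} (x₃ − y₃)/‖x − y‖³ dy = x₃/3. In other words, the magnetostatic potential of the uniformly magnetized ball M = M_s e₃ on the ball of radius R equals u(x) = M_s x₃/3 at every interior point x. -/
open MeasureTheory Real

/-!
For a ball with center `c` and uniform magnetization `u` in dimension `n`, substituting `v = x - y`
turns the potential at `x` into the integral of the dipole kernel `⟪u, v⟫ / ‖v‖ ^ n` over the ball
of radius `R` around `a = x - c`, which contains the origin. In polar coordinates around
the origin the Jacobian `r ^ (n - 1)` cancels the singularity, so a ray in direction `w` contributes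
`⟪u, w⟫` times the distance from the origin to the boundary of the ball,
`⟪a, w⟫ + √(⟪a, w⟫ ^ 2 + R ^ 2 - ‖a‖ ^ 2)`. The square root is even in `w` and drops out by
symmetry; what remains is the second moment `∫ ⟪u, w⟫ ⟪a, w⟫ dw` of the unit sphere, which by
rotation invariance is `⟪u, a⟫` times the volume of the unit ball.
-/

open Metric Module Set
open scoped Pointwise RealInnerProductSpace

section PolarCoordinates

variable {E F : Type*} [NormedAddCommGroup E] [NormedSpace ℝ E] [MeasurableSpace E]
  [NormedAddCommGroup F] [NormedSpace ℝ F]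

lemma integral_volumeIoiPow (n : ℕ) (g : ℝ → F) :
    ∫ r : Ioi (0 : ℝ), g r ∂Measure.volumeIoiPow n = ∫ r in Ioi (0 : ℝ), r ^ n • g r := by
  simp only [Measure.volumeIoiPow, ENNReal.ofReal]
  rw [integral_withDensity_eq_integral_smul (by fun_prop),
    integral_subtype_comap measurableSet_Ioi fun r ↦ (r ^ n).toNNReal • g r]
  refine setIntegral_congr_fun measurableSet_Ioi fun r hr ↦ ?_
  rw [NNReal.smul_def, Real.coe_toNNReal _ (pow_nonneg hr.out.le _)]

lemma integral_eq_integral_toSphere_integral_Ioi [BorelSpace E] [FiniteDimensional ℝ E]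
    [Nontrivial E] (μ : Measure E) [μ.IsAddHaarMeasure] {f : E → F} (hf : Integrable f μ) :
    ∫ v, f v ∂μ = ∫ w : sphere (0 : E) 1,
      (∫ r in Ioi (0 : ℝ), r ^ (finrank ℝ E - 1) • f (r • (w : E))) ∂μ.toSphere := by
  let polar := homeomorphUnitSphereProd E
  let g : sphere (0 : E) 1 × Ioi (0 : ℝ) → F := fun p ↦ f (polar.symm p)
  have g_polar : g ∘ polar = f ∘ Subtype.val := by ext z; simp [g]
  have polar_preserving := μ.measurePreserving_homeomorphUnitSphereProd
  have g_integrable : Integrable g (μ.toSphere.prod (.volumeIoiPow (finrank ℝ E - 1))) := by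
    rw [← polar_preserving.integrable_comp_emb polar.measurableEmbedding, g_polar,
      ← integrableOn_iff_comap_subtypeVal (measurableSet_singleton _).compl]
    exact hf.integrableOn
  calc ∫ v, f v ∂μ = ∫ z : ({0}ᶜ : Set E), f z ∂μ.comap (↑) := by
        rw [integral_subtype_comap (measurableSet_singleton _).compl f, restrict_compl_singleton]
    _ = ∫ z, g (polar z) ∂μ.comap (↑) := by simp [g]
    _ = ∫ p, g p ∂μ.toSphere.prod (.volumeIoiPow (finrank ℝ E - 1)) :=
        polar_preserving.integral_comp polar.measurableEmbedding g
    _ = _ := by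
        rw [integral_prod _ g_integrable]
        refine integral_congr_ae (.of_forall fun w ↦ ?_)
        exact integral_volumeIoiPow _ fun r ↦ f (r • (w : E))

end PolarCoordinates

section SphereSymmetry

variable {E F : Type*} [NormedAddCommGroup E] [NormedSpace ℝ E] [NormedAddCommGroup F]

/-- The homeomorphism of the unit sphere obtained by restricting a linear isometry of `E`. -/
def unitSphereHomeomorph (e : E ≃ₗᵢ[ℝ] E) : sphere (0 : E) 1 ≃ₜ sphere (0 : E) 1 :=
  e.toHomeomorph.subtype (by simp)

lemma Ioo_smul_image_preimage_unitSphereHomeomorph (e : E ≃ₗᵢ[ℝ] E) (s : Set (sphere (0 : E) 1)) :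
    Ioo (0 : ℝ) 1 • ((↑) '' (unitSphereHomeomorph e ⁻¹' s)) =
      e ⁻¹' (Ioo (0 : ℝ) 1 • ((↑) '' s)) := by
  ext v
  constructor
  · rintro ⟨r, hr, _, ⟨w, hw, rfl⟩, rfl⟩
    exact ⟨r, hr, e w, ⟨unitSphereHomeomorph e w, hw, rfl⟩, (map_smul e r (w : E)).symm⟩
  · rintro ⟨r, hr, _, ⟨w, hw, rfl⟩, hv : r • (w : E) = e v⟩
    refine ⟨r, hr, _, ⟨(unitSphereHomeomorph e).symm w, by simpa using hw, rfl⟩, e.injective ?_⟩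
    simp [unitSphereHomeomorph, ← hv]

variable [MeasurableSpace E] [BorelSpace E] {μ : Measure E}

lemma measurePreserving_unitSphereHomeomorph (e : E ≃ₗᵢ[ℝ] E) (he : MeasurePreserving e μ μ) :
    MeasurePreserving (unitSphereHomeomorph e) μ.toSphere μ.toSphere := by
  have φ_measurable := (unitSphereHomeomorph e).measurable
  refine ⟨φ_measurable, Measure.ext fun s hs ↦ ?_⟩
  rw [Measure.map_apply φ_measurable hs, μ.toSphere_apply' hs, μ.toSphere_apply' (φ_measurable hs),
    Ioo_smul_image_preimage_unitSphereHomeomorph,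
    he.measure_preimage_emb e.toHomeomorph.measurableEmbedding]

lemma integrable_toSphere_of_continuous [FiniteDimensional ℝ E] [μ.IsAddHaarMeasure] {f : E → F}
    (hf : Continuous f) : Integrable (fun w : sphere (0 : E) 1 ↦ f w) μ.toSphere :=
  (hf.comp continuous_subtype_val).integrable_of_hasCompactSupport (.of_compactSpace _)

variable [NormedSpace ℝ F]

lemma integral_toSphere_comp_linearIsometryEquiv (e : E ≃ₗᵢ[ℝ] E)
    (he : MeasurePreserving e μ μ) (f : E → F) :
    ∫ w, f (e w) ∂μ.toSphere = ∫ w, f w ∂μ.toSphere :=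
  (measurePreserving_unitSphereHomeomorph e he).integral_comp
    (unitSphereHomeomorph e).measurableEmbedding fun w : sphere (0 : E) 1 ↦ f w

lemma integral_toSphere_eq_zero_of_odd [μ.IsNegInvariant] {f : E → F} (hf : f.Odd) :
    ∫ w, f w ∂μ.toSphere = 0 := by
  have neg_invariant : ∫ w, f (-w) ∂μ.toSphere = ∫ w, f w ∂μ.toSphere :=
    integral_toSphere_comp_linearIsometryEquiv (.neg ℝ) (Measure.measurePreserving_neg μ) f
  simp_rw [hf _, integral_neg] at neg_invariant
  have : IsAddTorsionFree F := .of_isTorsionFree ℝ F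
  exact self_eq_neg.mp neg_invariant.symm

end SphereSymmetry

section DipoleKernel

variable {E : Type*} [NormedAddCommGroup E] [InnerProductSpace ℝ E]

/-- The potential at displacement `v` of a point dipole with moment `u`, up to the normalizing
constant. In dimension `n` it decays like `‖v‖ ^ (1 - n)`; its value at the singularity `v = 0`
is `0` because division by zero gives zero. -/
noncomputable def dipoleKernel (u v : E) : ℝ := ⟪u, v⟫ / ‖v‖ ^ finrank ℝ E

lemma abs_dipoleKernel_le (u v : E) : |dipoleKernel u v| ≤ ‖u‖ * ‖v‖ / ‖v‖ ^ finrank ℝ E := by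
  rw [dipoleKernel, abs_div, abs_pow, abs_norm]
  gcongr
  exact abs_real_inner_le_norm u v

variable [FiniteDimensional ℝ E]

lemma pow_finrank_sub_one_mul_dipoleKernel_smul (u : E) {w : E} (hw : ‖w‖ = 1) {r : ℝ}
    (hr : 0 < r) : r ^ (finrank ℝ E - 1) * dipoleKernel u (r • w) = ⟪u, w⟫ := by
  have : Nontrivial E := nontrivial_of_ne w 0 (norm_ne_zero_iff.mp (by simp [hw]))
  rw [dipoleKernel, real_inner_smul_right, norm_smul, hw, mul_one, norm_of_nonneg hr.le,
    ← pow_sub_one_mul finrank_pos.ne' r]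
  field_simp

lemma integrableOn_dipoleKernel_ball [MeasurableSpace E] [BorelSpace E] (u : E) (ρ : ℝ) :
    IntegrableOn (dipoleKernel u) (ball 0 ρ) := by
  obtain _ | _ := subsingleton_or_nontrivial E
  · have kernel_eq_zero : dipoleKernel u = 0 := by ext v; simp [dipoleKernel, Subsingleton.elim u 0]
    exact kernel_eq_zero ▸ integrableOn_zero
  have bound_integrable :
      IntegrableOn (fun v : E ↦ ‖u‖ * ‖v‖ / ‖v‖ ^ finrank ℝ E) (ball 0 ρ) := by
    rw [integrableOn_fun_norm_addHaar volume (f := fun r ↦ ‖u‖ * r / r ^ finrank ℝ E)]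
    have const_integrable : IntegrableOn (fun _ : ℝ ↦ ‖u‖) (Ioo 0 ρ) := by simp
    refine const_integrable.congr_fun (fun r hr ↦ ?_) measurableSet_Ioo
    have hr₀ : r ≠ 0 := hr.1.ne'
    rw [smul_eq_mul, ← pow_sub_one_mul finrank_pos.ne' r]
    field_simp
  refine bound_integrable.mono' ?_ (.of_forall (abs_dipoleKernel_le u))
  unfold dipoleKernel
  exact Measurable.aestronglyMeasurable (by fun_prop)

lemma integrableOn_dipoleKernel_of_isBounded [MeasurableSpace E] [BorelSpace E]
    (u : E) {s : Set E} (hs : Bornology.IsBounded s) :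
    IntegrableOn (dipoleKernel u) s := by
  obtain ⟨ρ, hρ⟩ := hs.subset_ball 0
  exact (integrableOn_dipoleKernel_ball u ρ).mono_set hρ

end DipoleKernel

section Ray

variable {E : Type*} [NormedAddCommGroup E] [InnerProductSpace ℝ E] {a w : E} {R r : ℝ}

/-- The length of the part of the ray from the origin in the unit direction `w` that lies in the
closed ball of radius `R` around `a`, when this ball contains the origin. It is the larger root
of `‖r • w - a‖ ^ 2 = R ^ 2` as a quadratic equation in `r`. -/
noncomputable def rayLength (a : E) (R : ℝ) (w : E) : ℝ :=
  ⟪a, w⟫ + √(⟪a, w⟫ ^ 2 + (R ^ 2 - ‖a‖ ^ 2))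

lemma abs_inner_le_sqrt_of_norm_le (ha : ‖a‖ ≤ R) (w : E) :
    |⟪a, w⟫| ≤ √(⟪a, w⟫ ^ 2 + (R ^ 2 - ‖a‖ ^ 2)) :=
  Real.abs_le_sqrt (by nlinarith [norm_nonneg a])

lemma rayLength_nonneg (ha : ‖a‖ ≤ R) (w : E) : 0 ≤ rayLength a R w := by
  have := neg_abs_le ⟪a, w⟫
  have := abs_inner_le_sqrt_of_norm_le ha w
  unfold rayLength
  linarith

lemma smul_mem_closedBall_iff_le_rayLength (ha : ‖a‖ ≤ R) (hw : ‖w‖ = 1) (hr : 0 < r) :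
    r • w ∈ closedBall a R ↔ r ≤ rayLength a R w := by
  have hR : 0 ≤ R := (norm_nonneg a).trans ha
  have norm_sq : ‖r • w - a‖ ^ 2 = (r - ⟪a, w⟫) ^ 2 + ‖a‖ ^ 2 - ⟪a, w⟫ ^ 2 := by
    rw [norm_sub_sq_real, real_inner_smul_left, real_inner_comm, norm_smul, hw,
      norm_of_nonneg hr.le]
    ring
  have neg_sqrt_le : -√(⟪a, w⟫ ^ 2 + (R ^ 2 - ‖a‖ ^ 2)) ≤ r - ⟪a, w⟫ := by
    linarith [abs_inner_le_sqrt_of_norm_le ha w, le_abs_self ⟪a, w⟫]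
  calc r • w ∈ closedBall a R ↔ ‖r • w - a‖ ^ 2 ≤ R ^ 2 := by
        rw [mem_closedBall_iff_norm, sq_le_sq₀ (norm_nonneg _) hR]
    _ ↔ (r - ⟪a, w⟫) ^ 2 ≤ ⟪a, w⟫ ^ 2 + (R ^ 2 - ‖a‖ ^ 2) := by
        rw [norm_sq]
        constructor <;> intro h <;> linarith
    _ ↔ r - ⟪a, w⟫ ≤ √(⟪a, w⟫ ^ 2 + (R ^ 2 - ‖a‖ ^ 2)) := by
        rw [Real.sq_le (by nlinarith [norm_nonneg a])]
        exact and_iff_right neg_sqrt_le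
    _ ↔ r ≤ rayLength a R w := sub_le_iff_le_add'

lemma integral_Ioi_pow_mul_indicator_dipoleKernel [FiniteDimensional ℝ E] (ha : ‖a‖ ≤ R)
    (hw : ‖w‖ = 1) (u : E) :
    ∫ r in Ioi (0 : ℝ), r ^ (finrank ℝ E - 1) •
      (closedBall a R).indicator (dipoleKernel u) (r • w) = ⟪u, w⟫ * rayLength a R w := by
  have integrand_eq : EqOn
      (fun r ↦ r ^ (finrank ℝ E - 1) • (closedBall a R).indicator (dipoleKernel u) (r • w))
      ((Iic (rayLength a R w)).indicator fun _ ↦ ⟪u, w⟫) (Ioi 0) := fun r hr ↦ by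
    simp only [indicator, smul_mem_closedBall_iff_le_rayLength ha hw hr, mem_Iic, smul_eq_mul,
      mul_ite, pow_finrank_sub_one_mul_dipoleKernel_smul u hw hr, mul_zero]
  rw [setIntegral_congr_fun measurableSet_Ioi integrand_eq, setIntegral_indicator measurableSet_Iic,
    Ioi_inter_Iic]
  simp [rayLength_nonneg ha, mul_comm]

end Ray

section SphereMomentsAndPotential

variable {E : Type*} [NormedAddCommGroup E] [InnerProductSpace ℝ E] [FiniteDimensional ℝ E]
  [MeasurableSpace E] [BorelSpace E]

lemma integral_toSphere_inner_sq_eq_of_norm_eq {u v : E} (h : ‖u‖ = ‖v‖) :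
    ∫ w, ⟪u, (w : E)⟫ ^ 2 ∂(volume : Measure E).toSphere =
      ∫ w, ⟪v, (w : E)⟫ ^ 2 ∂(volume : Measure E).toSphere := by
  let ρ := (ℝ ∙ (u - v))ᗮ.reflection
  have inner_reflection (w : E) : ⟪v, ρ w⟫ = ⟪u, w⟫ := by
    rw [← Submodule.reflection_sub h, ρ.inner_map_map]
  rw [← integral_toSphere_comp_linearIsometryEquiv ρ ρ.measurePreserving fun w ↦ ⟪v, w⟫ ^ 2]
  simp_rw [inner_reflection]

lemma integral_toSphere_inner_sq (u : E) :
    ∫ w, ⟪u, (w : E)⟫ ^ 2 ∂(volume : Measure E).toSphere =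
      volume.real (ball (0 : E) 1) * ‖u‖ ^ 2 := by
  obtain _ | _ := subsingleton_or_nontrivial E
  · simp [Subsingleton.elim u 0]
  let b := stdOrthonormalBasis ℝ E
  have sum_inner_sq (w : sphere (0 : E) 1) : ∑ i, ⟪‖u‖ • b i, (w : E)⟫ ^ 2 = ‖u‖ ^ 2 := by
    simp_rw [real_inner_smul_left, mul_pow, ← Finset.mul_sum, b.sum_sq_inner_right]
    simp
  have finrank_ne_zero : (finrank ℝ E : ℝ) ≠ 0 := by simp [finrank_pos.ne']
  apply mul_left_cancel₀ finrank_ne_zero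
  -- The `n` vectors of an orthonormal basis, scaled to the length of `u`, all have the same second
  -- moment, and by Parseval these moments add up to `‖u‖ ^ 2` times the area of the sphere.
  calc finrank ℝ E * ∫ w, ⟪u, (w : E)⟫ ^ 2 ∂(volume : Measure E).toSphere
      = ∑ i, ∫ w, ⟪‖u‖ • b i, (w : E)⟫ ^ 2 ∂(volume : Measure E).toSphere := by
        rw [Finset.sum_congr rfl fun i _ ↦
          integral_toSphere_inner_sq_eq_of_norm_eq (u := ‖u‖ • b i) (v := u) (by simp [norm_smul])]
        simp
    _ = ∫ w, ∑ i, ⟪‖u‖ • b i, (w : E)⟫ ^ 2 ∂(volume : Measure E).toSphere :=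
        (integral_finsetSum _ fun i _ ↦
          integrable_toSphere_of_continuous (f := fun w ↦ ⟪‖u‖ • b i, w⟫ ^ 2) (by fun_prop)).symm
    _ = finrank ℝ E * (volume.real (ball (0 : E) 1) * ‖u‖ ^ 2) := by
        simp [sum_inner_sq, mul_assoc]

lemma integral_toSphere_inner_mul_inner (u v : E) :
    ∫ w, ⟪u, (w : E)⟫ * ⟪v, (w : E)⟫ ∂(volume : Measure E).toSphere =
      volume.real (ball (0 : E) 1) * ⟪u, v⟫ := by
  have polarization (w : E) :
      ⟪u, w⟫ * ⟪v, w⟫ = (⟪u + v, w⟫ ^ 2 - ⟪u - v, w⟫ ^ 2) / 4 := by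
    rw [inner_add_left, inner_sub_left]
    ring
  simp_rw [polarization]
  rw [integral_div, integral_sub
    (integrable_toSphere_of_continuous (f := fun w ↦ ⟪u + v, w⟫ ^ 2) (by fun_prop))
    (integrable_toSphere_of_continuous (f := fun w ↦ ⟪u - v, w⟫ ^ 2) (by fun_prop)),
    integral_toSphere_inner_sq, integral_toSphere_inner_sq, norm_add_sq_real, norm_sub_sq_real]
  ring

lemma integral_toSphere_inner_mul_rayLength (u a : E) (R : ℝ) :
    ∫ w, ⟪u, (w : E)⟫ * rayLength a R w ∂(volume : Measure E).toSphere =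
      volume.real (ball (0 : E) 1) * ⟪u, a⟫ := by
  have sqrt_part_odd :
      (fun w ↦ ⟪u, w⟫ * √(⟪a, w⟫ ^ 2 + (R ^ 2 - ‖a‖ ^ 2))).Odd := fun w ↦ by
    simp [inner_neg_right]
  simp_rw [rayLength, mul_add]
  rw [integral_add (integrable_toSphere_of_continuous (f := fun w ↦ ⟪u, w⟫ * ⟪a, w⟫) (by fun_prop))
    (integrable_toSphere_of_continuous
      (f := fun w ↦ ⟪u, w⟫ * √(⟪a, w⟫ ^ 2 + (R ^ 2 - ‖a‖ ^ 2))) (by fun_prop)),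
    integral_toSphere_inner_mul_inner, integral_toSphere_eq_zero_of_odd sqrt_part_odd, add_zero]

lemma setIntegral_closedBall_dipoleKernel (u : E) {a : E} {R : ℝ} (ha : ‖a‖ ≤ R) :
    ∫ v in closedBall a R, dipoleKernel u v = volume.real (ball (0 : E) 1) * ⟪u, a⟫ := by
  obtain _ | _ := subsingleton_or_nontrivial E
  · simp [dipoleKernel, Subsingleton.elim u 0]
  have kernel_integrable : Integrable ((closedBall a R).indicator (dipoleKernel u)) :=
    (integrableOn_dipoleKernel_of_isBounded u isBounded_closedBall).integrable_indicator
      measurableSet_closedBall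
  calc ∫ v in closedBall a R, dipoleKernel u v
      = ∫ w : sphere (0 : E) 1, (∫ r in Ioi (0 : ℝ), r ^ (finrank ℝ E - 1) •
          (closedBall a R).indicator (dipoleKernel u) (r • (w : E))) ∂volume.toSphere := by
        rw [← integral_indicator measurableSet_closedBall,
          integral_eq_integral_toSphere_integral_Ioi volume kernel_integrable]
    _ = ∫ w : sphere (0 : E) 1, ⟪u, (w : E)⟫ * rayLength a R w ∂volume.toSphere := by
        refine integral_congr_ae (.of_forall fun w ↦ ?_)
        exact integral_Ioi_pow_mul_indicator_dipoleKernel ha (norm_eq_of_mem_sphere w) u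
    _ = volume.real (ball (0 : E) 1) * ⟪u, a⟫ := integral_toSphere_inner_mul_rayLength u a R

theorem magPot_uniform_ball_interior_general (u : E) {c x : E} {R : ℝ} (hx : x ∈ closedBall c R) :
    ∫ y in closedBall c R, ⟪u, x - y⟫ / ‖x - y‖ ^ finrank ℝ E =
      volume.real (ball (0 : E) 1) * ⟪u, x - c⟫ := by
  have preimage_eq : (x - ·) ⁻¹' closedBall (x - c) R = closedBall c R := by
    ext y
    simp [dist_eq_norm, norm_sub_rev]
  have sub_preserving := Measure.measurePreserving_sub_left (volume : Measure E) x
  rw [← setIntegral_closedBall_dipoleKernel u (mem_closedBall_iff_norm.mp hx), ← preimage_eq]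
  exact sub_preserving.setIntegral_preimage_emb (measurableEmbedding_subLeft x) (dipoleKernel u) _

end SphereMomentsAndPotential

lemma volume_real_ball_fin_three (x : EuclideanSpace ℝ (Fin 3)) {r : ℝ} (hr : 0 ≤ r) :
    volume.real (ball x r) = 4 * π / 3 * r ^ 3 := by
  rw [Measure.real, EuclideanSpace.volume_ball_fin_three, ← ENNReal.ofReal_pow hr,
    ← ENNReal.ofReal_mul (by positivity), ENNReal.toReal_ofReal (by positivity)]
  ring

lemma setIntegral_closedBall_apply_sub_div_norm_pow_three {c x : EuclideanSpace ℝ (Fin 3)} {R : ℝ}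
    (hx : x ∈ closedBall c R) (i : Fin 3) :
    ∫ y in closedBall c R, (x i - y i) / ‖x - y‖ ^ 3 = 4 * π / 3 * (x i - c i) := by
  simpa [EuclideanSpace.inner_single_left, volume_real_ball_fin_three 0 zero_le_one] using
    magPot_uniform_ball_interior_general (EuclideanSpace.single i (1 : ℝ)) hx

/-- Interior potential of the uniformly magnetized ball: for `‖x‖ < R`,
`(1/4π) ∫_{‖y‖ ≤ R} (x₃ - y₃)/‖x - y‖³ dy = x₃/3`. -/
theorem magPot_uniform_ball_interior (R : ℝ) (hR : 0 < R) :
    ∀ x : EuclideanSpace ℝ (Fin 3), ‖x‖ < R →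
      (1 / (4 * π)) * ∫ y in Metric.closedBall (0 : EuclideanSpace ℝ (Fin 3)) R,
          (x 2 - y 2) / ‖x - y‖ ^ 3 = x 2 / 3 := by
  intro x hx
  rw [setIntegral_closedBall_apply_sub_div_norm_pow_three (mem_closedBall_zero_iff.mpr hx.le) 2,
    PiLp.zero_apply, sub_zero]
  field_simp
end
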